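/- arXiv:math/9909097 — 2 statements merged into one kernel-verified Lean document; each statement's English description precedes it below -/
import Mathlib

section
/- If 0 < α ≤ 1/2, then the topological support of μ_α is the whole interval [0, M_α]. -/
/-!
Write `M = M α`, the nonnegative root of `x² + αx = α`, i.e. the fixed point of `T α`.  Both `T 0`
and `T α` map `[0, M]` into itself, so `Y` takes values in `[0, M]`; this gives one inclusion.

For the other one, `T 0 [0, M] = [0, M/(1+M)]` and `T α [0, M] = [α/(1+α), M]`, and these cover
`[0, M]` exactly when `α ≤ M`, i.e. when `α ≤ 1/2`. Iterating the covering (`exists_code`), every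
`y ∈ [0, M]` lies in the image of `[0, M]` under a composition of `n` of the maps, for each `n`.
Although `T 0` is not a strict contraction (its derivative at `0` is `1`), each map sends an
interval of length `d` to one of length at most `d / (1 + d)`, so such an image has length at
most `M / (1 + n M)` (`comp_sub_le`), uniformly in the word. Finally every word of length `n` is
realized by all `t` in some dyadic interval (`exists_cylinder`), which has positive Lebesgue
measure, and for those `t` the point `Y α t` lies in the same image as `y`.
-/

open MeasureTheory Filter Set ENNReal

noncomputable def T (a x : ℝ) : ℝ := (x + a) / (1 + x + a)

noncomputable def M (a : ℝ) : ℝ := (-a + Real.sqrt (a ^ 2 + 4 * a)) / 2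

/-- `comp x n s = T_{x 1} ∘ T_{x 2} ∘ ⋯ ∘ T_{x n} (s)`. -/
noncomputable def comp (x : ℕ → ℝ) : ℕ → ℝ → ℝ
  | 0, s => s
  | n + 1, s => comp x n (T (x (n + 1)) s)

/-- An i.i.d. sequence of fair-coin random variables taking values `0` and `α`, realized on
the probability space `[0,1)` with Lebesgue measure via binary digits:
`seq α t i = α` if the binary digit of `t` at position `i` is `1`, and `0` otherwise. -/
noncomputable def seq (α t : ℝ) (i : ℕ) : ℝ :=
  if Int.fract (2 ^ i * t) < 1 / 2 then 0 else α

/-- The (a.s. defined) limit `Y = lim_n T_{X 1} ∘ ⋯ ∘ T_{X n} (0)`; since the sequence is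
nondecreasing and bounded, the limit equals the supremum. -/
noncomputable def Y (α t : ℝ) : ℝ := ⨆ n, comp (seq α t) n 0

/-- `mu α` is the law of the random continued fraction `Y`. -/
noncomputable def mu (α : ℝ) : Measure ℝ :=
  Measure.map (Y α) (volume.restrict (Set.Ico (0 : ℝ) 1))

/-- The topological support of a measure: the set of points all of whose open neighborhoods
have positive measure. -/
def msupport (μ : Measure ℝ) : Set ℝ := {x | ∀ U : Set ℝ, IsOpen U → x ∈ U → 0 < μ U}

lemma M_eq {α : ℝ} (h : 0 < α) : M α ^ 2 + α * M α = α := by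
  have := Real.sq_sqrt (show 0 ≤ α ^ 2 + 4 * α by positivity)
  unfold M
  linear_combination this / 4

lemma M_pos {α : ℝ} (h : 0 < α) : 0 < M α := by
  have : α < Real.sqrt (α ^ 2 + 4 * α) := Real.lt_sqrt_of_sq_lt (by linarith)
  unfold M
  linarith

lemma M_lt_one {α : ℝ} (h : 0 < α) : M α < 1 := by
  have h1 := M_eq h
  by_contra! hc
  nlinarith

lemma le_M {α : ℝ} (h : 0 < α) (h2 : α ≤ 1 / 2) : α ≤ M α := by
  have h1 := M_eq h
  have h3 := M_pos h
  by_contra! hc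
  nlinarith

lemma T_mem {α a s : ℝ} (h : 0 < α) (ha : a = 0 ∨ a = α) (hs : s ∈ Icc 0 (M α)) :
    T a s ∈ Icc 0 (M α) := by
  obtain ⟨hs0, hs1⟩ := hs
  have h1 := M_eq h
  have h2 := M_pos h
  have h3 := M_lt_one h
  have ha0 : 0 ≤ a := by rcases ha with rfl | rfl <;> linarith
  refine ⟨by unfold T; positivity, ?_⟩
  unfold T
  rw [div_le_iff₀ (by positivity)]
  rcases ha with rfl | rfl
  · nlinarith
  · nlinarith [mul_nonneg (sub_nonneg.2 hs1) (sub_nonneg.2 h3.le)]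

/-- The images of `[0, M α]` under `T 0` and `T α` cover `[0, M α]`. -/
lemma exists_T {α y : ℝ} (h : 0 < α) (h2 : α ≤ 1 / 2) (hy : y ∈ Icc 0 (M α)) :
    ∃ a s, (a = 0 ∨ a = α) ∧ s ∈ Icc 0 (M α) ∧ T a s = y := by
  obtain ⟨hy0, hy1⟩ := hy
  have h1 := M_eq h
  have hM := M_pos h
  have h3 := M_lt_one h
  have h4 := le_M h h2
  have h5 : 0 < 1 - y := by linarith
  have key : ∀ a, T a (y / (1 - y) - a) = y := by
    intro a
    have : 1 + y / (1 - y) = 1 / (1 - y) := by field_simp; ring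
    unfold T
    rw [sub_add_cancel, show 1 + (y / (1 - y) - a) + a = 1 / (1 - y) by linarith]
    field_simp
  have hq : 0 ≤ y / (1 - y) := by positivity
  by_cases hc : y / (1 - y) ≤ M α
  · exact ⟨0, _, Or.inl rfl, by rw [sub_zero]; exact ⟨hq, hc⟩, key 0⟩
  · refine ⟨α, _, Or.inr rfl, ⟨by linarith, ?_⟩, key α⟩
    rw [sub_le_iff_le_add, div_le_iff₀ h5]
    nlinarith

lemma comp_congr {x x' : ℕ → ℝ} (n : ℕ) (h : ∀ i, 1 ≤ i → i ≤ n → x i = x' i) (s : ℝ) :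
    comp x n s = comp x' n s := by
  induction n generalizing s with
  | zero => rfl
  | succ n ih =>
    simp only [comp]
    rw [h (n + 1) (by omega) le_rfl]
    exact ih (fun i h1 h2 => h i h1 (by omega)) _

/-- Every point of `[0, M α]` lies in the image of `[0, M α]` under some word of length `n`. -/
lemma exists_code {α y : ℝ} (h : 0 < α) (h2 : α ≤ 1 / 2) (hy : y ∈ Icc 0 (M α)) (n : ℕ) :
    ∃ (b : ℕ → ℝ) (s : ℝ), (∀ i, b i = 0 ∨ b i = α) ∧ s ∈ Icc 0 (M α) ∧ comp b n s = y := by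
  induction n with
  | zero => exact ⟨fun _ => 0, y, fun _ => Or.inl rfl, hy, rfl⟩
  | succ n ih =>
    obtain ⟨b, s, hb, hs, rfl⟩ := ih
    obtain ⟨a, s', ha, hs', rfl⟩ := exists_T h h2 hs
    refine ⟨Function.update b (n + 1) a, s', fun i => ?_, hs', ?_⟩
    · by_cases hi : i = n + 1
      · subst hi; simpa using ha
      · simpa [hi] using hb i
    · simp only [comp, Function.update_self]
      exact comp_congr n (fun i _ hi => Function.update_of_ne (by omega) _ _) _

lemma T_sub {a s s' : ℝ} (ha : 0 ≤ a) (hs : 0 ≤ s) (hss : s ≤ s') :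
    T a s' - T a s = (s' - s) / ((1 + s + a) * (1 + s' + a)) := by
  have h1 : 1 + s + a ≠ 0 := by positivity
  have h2 : 1 + s' + a ≠ 0 := by have := hs.trans hss; positivity
  unfold T
  field_simp
  ring

lemma T_mono {a s s' : ℝ} (ha : 0 ≤ a) (hs : 0 ≤ s) (hss : s ≤ s') : T a s ≤ T a s' := by
  have h0 := hs.trans hss
  have h1 := T_sub ha hs hss
  have : 0 ≤ (s' - s) / ((1 + s + a) * (1 + s' + a)) :=
    div_nonneg (by linarith) (by positivity)
  linarith

lemma comp_mono {x : ℕ → ℝ} (hx : ∀ i, 0 ≤ x i) (n : ℕ) {s s' : ℝ} (hs : 0 ≤ s) (hss : s ≤ s') :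
    comp x n s ≤ comp x n s' := by
  induction n generalizing s s' with
  | zero => exact hss
  | succ n ih =>
    have := hx (n + 1)
    exact ih (by unfold T; positivity) (T_mono this hs hss)

/-- A word of length `n` maps an interval of length `d` to one of length at most `d / (1 + n d)`,
the `n`-th iterate of `d ↦ d / (1 + d)`. -/
lemma comp_sub_le {x : ℕ → ℝ} (hx : ∀ i, 0 ≤ x i) (n : ℕ) {s s' : ℝ} (hs : 0 ≤ s)
    (hss : s ≤ s') : comp x n s' - comp x n s ≤ (s' - s) / (1 + n * (s' - s)) := by
  induction n generalizing s s' with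
  | zero => simp [comp]
  | succ n ih =>
    have ha := hx (n + 1)
    have hd : 0 ≤ s' - s := by linarith
    have hs' := hs.trans hss
    have hm := T_mono ha hs hss
    have h1 : T (x (n + 1)) s' - T (x (n + 1)) s ≤ (s' - s) / (1 + (s' - s)) := by
      rw [T_sub ha hs hss]
      apply div_le_div_of_nonneg_left hd (by positivity)
      nlinarith [mul_nonneg (add_nonneg hs ha) (add_nonneg hs' ha)]
    refine (ih (by unfold T; positivity) hm).trans ?_
    have he := sub_nonneg.2 hm
    generalize T (x (n + 1)) s' - T (x (n + 1)) s = e at h1 he ⊢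
    rw [le_div_iff₀ (by positivity)] at h1
    rw [div_le_div_iff₀ (by positivity) (by positivity)]
    push_cast
    nlinarith

lemma comp_mem {α : ℝ} (h : 0 < α) {x : ℕ → ℝ} (hx : ∀ i, x i = 0 ∨ x i = α) (n : ℕ) {s : ℝ}
    (hs : s ∈ Icc 0 (M α)) : comp x n s ∈ Icc 0 (M α) := by
  induction n generalizing s with
  | zero => exact hs
  | succ n ih => exact ih (T_mem h (hx _) hs)

lemma comp_add {α : ℝ} (h : 0 < α) {x : ℕ → ℝ} (hx : ∀ i, x i = 0 ∨ x i = α) (n k : ℕ) {s : ℝ}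
    (hs : s ∈ Icc 0 (M α)) : ∃ s' ∈ Icc 0 (M α), comp x (n + k) s = comp x n s' := by
  induction k generalizing s with
  | zero => exact ⟨s, hs, rfl⟩
  | succ k ih => exact ih (T_mem h (hx _) hs)

lemma seq_mem (α t : ℝ) (i : ℕ) : seq α t i = 0 ∨ seq α t i = α := by
  unfold _root_.seq
  split_ifs <;> simp

lemma bddAbove_comp {α : ℝ} (h : 0 < α) (t : ℝ) :
    BddAbove (range fun n => comp (seq α t) n 0) := by
  refine ⟨M α, ?_⟩
  rintro _ ⟨n, rfl⟩
  exact (comp_mem h (seq_mem α t) n ⟨le_rfl, (M_pos h).le⟩).2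

lemma Y_mem {α : ℝ} (h : 0 < α) (t : ℝ) (n : ℕ) :
    Y α t ∈ Icc (comp (seq α t) n 0) (comp (seq α t) n (M α)) := by
  have hM := (M_pos h).le
  have h0 : (0 : ℝ) ∈ Icc 0 (M α) := ⟨le_rfl, hM⟩
  have hx : ∀ i, 0 ≤ seq α t i := fun i => by
    rcases seq_mem α t i with h0 | h0 <;> linarith
  refine ⟨le_ciSup (bddAbove_comp h t) n, ciSup_le fun m => ?_⟩
  rcases le_total n m with hnm | hnm
  · obtain ⟨k, rfl⟩ := Nat.exists_eq_add_of_le hnm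
    obtain ⟨s, hs, hs'⟩ := comp_add h (seq_mem α t) n k h0
    rw [hs']
    exact comp_mono hx n hs.1 hs.2
  · obtain ⟨k, rfl⟩ := Nat.exists_eq_add_of_le hnm
    obtain ⟨s, hs, hs'⟩ := comp_add h (seq_mem α t) m k ⟨hM, le_rfl⟩
    rw [hs']
    exact comp_mono hx m le_rfl hs.1

lemma measurable_comp (α : ℝ) (n : ℕ) {f : ℝ → ℝ} (hf : Measurable f) :
    Measurable fun t => comp (seq α t) n (f t) := by
  induction n generalizing f with
  | zero => exact hf
  | succ n ih =>
    apply ih (f := fun t => T (seq α t (n + 1)) (f t))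
    have : Measurable fun t => seq α t (n + 1) := by
      unfold _root_.seq
      exact Measurable.ite (measurableSet_lt (by fun_prop) (by fun_prop)) (by fun_prop)
        (by fun_prop)
    unfold T
    fun_prop

lemma measurable_Y (α : ℝ) : Measurable (Y α) :=
  Measurable.iSup fun n => measurable_comp α n measurable_const

/-- Every word of length `n` is realized on a dyadic interval of length `2 ^ -(n + 1)`; the extra
factor `2` appears because `seq α t 0`, the first binary digit of `t`, is not used by `comp`. -/
lemma exists_cylinder {α : ℝ} {b : ℕ → ℝ} (hb : ∀ i, b i = 0 ∨ b i = α) (n : ℕ) :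
    ∃ k : ℕ, k + 1 ≤ 2 ^ (n + 1) ∧ ∀ t : ℝ, (k : ℝ) ≤ 2 ^ (n + 1) * t → 2 ^ (n + 1) * t < k + 1 →
      ∀ i, 1 ≤ i → i ≤ n → seq α t i = b i := by
  induction n with
  | zero => exact ⟨0, by norm_num, fun t _ _ i h1 h2 => by omega⟩
  | succ n ih =>
    obtain ⟨k, hk, hkt⟩ := ih
    have hfr : ∀ t : ℝ, (k : ℝ) ≤ 2 ^ (n + 1) * t → 2 ^ (n + 1) * t < k + 1 →
        Int.fract (2 ^ (n + 1) * t) = 2 ^ (n + 1) * t - k := by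
      intro t h1 h2
      rw [Int.fract_eq_iff]
      exact ⟨by linarith, by linarith, k, by push_cast; ring⟩
    rcases hb (n + 1) with hbn | hbn
    · refine ⟨2 * k, by rw [pow_succ]; omega, fun t h1 h2 i hi1 hi2 => ?_⟩
      push_cast at h1 h2
      rw [pow_succ] at h1 h2
      have h3 : (k : ℝ) ≤ 2 ^ (n + 1) * t := by linarith
      have h4 : 2 ^ (n + 1) * t < k + 1 := by linarith
      rcases hi2.lt_or_eq with hi | rfl
      · exact hkt t h3 h4 i hi1 (by omega)
      · rw [hbn, _root_.seq, hfr t h3 h4, if_pos (by linarith)]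
    · refine ⟨2 * k + 1, by rw [pow_succ]; omega, fun t h1 h2 i hi1 hi2 => ?_⟩
      push_cast at h1 h2
      rw [pow_succ] at h1 h2
      have h3 : (k : ℝ) ≤ 2 ^ (n + 1) * t := by linarith
      have h4 : 2 ^ (n + 1) * t < k + 1 := by linarith
      rcases hi2.lt_or_eq with hi | rfl
      · exact hkt t h3 h4 i hi1 (by omega)
      · rw [hbn, _root_.seq, hfr t h3 h4, if_neg (by linarith)]

theorem support_is_interval (α : ℝ) (hα0 : 0 < α) (hα : α ≤ 1 / 2) :
    msupport (mu α) = Set.Icc 0 (M α) := by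
  have hM := M_pos hα0
  apply Subset.antisymm
  · intro y hy
    by_contra hc
    refine (hy (Icc 0 (M α))ᶜ isClosed_Icc.isOpen_compl hc).ne' ?_
    rw [mu, Measure.map_apply (measurable_Y α) measurableSet_Icc.compl]
    convert measure_empty (μ := volume.restrict (Set.Ico (0 : ℝ) 1))
    ext t
    simpa [comp] using Y_mem hα0 t 0
  · intro y hy U hU hyU
    obtain ⟨ε, hε, hball⟩ := Metric.isOpen_iff.1 hU y hyU
    obtain ⟨n, hn⟩ := exists_nat_gt (1 / ε)
    have hn' : M α / (1 + n * M α) < ε := by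
      rw [div_lt_iff₀ (by positivity)]
      rw [div_lt_iff₀ hε] at hn
      nlinarith
    obtain ⟨b, s, hb, hs, rfl⟩ := exists_code hα0 hα hy n
    have hb0 : ∀ i, 0 ≤ b i := fun i => by rcases hb i with h | h <;> rw [h]; exact hα0.le
    obtain ⟨k, hk, hkt⟩ := exists_cylinder hb n
    have hp : (0 : ℝ) < 2 ^ (n + 1) := by positivity
    have hk' : (k : ℝ) + 1 ≤ 2 ^ (n + 1) := by exact_mod_cast hk
    rw [mu, Measure.map_apply (measurable_Y α) hU.measurableSet]
    have hsub : Ico ((k : ℝ) / 2 ^ (n + 1)) ((k + 1) / 2 ^ (n + 1)) ⊆ Y α ⁻¹' U ∩ Ico 0 1 := by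
      intro t ht
      refine ⟨?_, (by positivity : (0 : ℝ) ≤ k / 2 ^ (n + 1)).trans ht.1,
        ht.2.trans_le ((div_le_one hp).2 hk')⟩
      have h1 := (div_le_iff₀' hp).1 ht.1
      have h2 := (lt_div_iff₀' hp).1 ht.2
      have hY := Y_mem hα0 t n
      rw [comp_congr n (hkt t h1 h2), comp_congr n (hkt t h1 h2)] at hY
      have hd := comp_sub_le hb0 n le_rfl hM.le
      rw [sub_zero] at hd
      have h3 := comp_mono hb0 n le_rfl hs.1
      have h4 := comp_mono hb0 n hs.1 hs.2
      apply hball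
      rw [Metric.mem_ball, Real.dist_eq, abs_lt]
      constructor <;> linarith [hY.1, hY.2]
    rw [Measure.restrict_apply (measurable_Y α hU.measurableSet)]
    refine lt_of_lt_of_le ?_ (measure_mono hsub)
    rw [Real.volume_Ico, ENNReal.ofReal_pos, ← sub_div]
    exact div_pos (by linarith) hp
end

section
/- If α ≥ 1/6, then the cumulative distribution function of μ_α is dominated by that of the uniform distribution on [0, M_α]: for every s ∈ [0, M_α], μ_α((−∞, s]) ≤ s/M_α. -/
/-!
The uniform law on `[0, M α]` is a super-solution of the self-similarity equation satisfied by
the distribution function of `μ_α`. Conditioning on the first digit turns a distribution function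
`F` into `s ↦ (F (s/(1-s)) + F (s/(1-s) - α)) / 2`. This operator is monotone, and it maps the
uniform distribution function `G` to something `≤ G` exactly when `M α ≥ 1/3`, that is, when
`α ≥ 1/6` (`clip_step`). The law of `T_{X_1} ∘ ⋯ ∘ T_{X_n} (M α)` is obtained by iterating the
operator on the distribution function of the point mass at `M α`, which lies below `G`; hence its
distribution function lies below `G` for every `n` (`volume_iter_le`).

It remains to let `n → ∞`. Each `T_a`, `a ≥ 0`, shrinks a distance `d` between nonnegative points
to at most `d / (1 + d)`, so `T_{x_1} ∘ ⋯ ∘ T_{x_n}` evaluated at `0` and at `M α` differ by at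
most `1 / (1 + n)`, for every digit sequence (`comp_sub_le`). Thus `Y ≤ s` forces the `n`-th
iterate started from `M α` to be `≤ s + 1 / (1 + n)`.
-/

open MeasureTheory Filter Set ENNReal

/-! ### The fixed point `M α` and the uniform distribution function -/

lemma M_facts {α : ℝ} (hα : 1 / 6 ≤ α) :
    1 / 3 ≤ M α ∧ M α < 1 ∧ M α ^ 2 = α * (1 - M α) := by
  have h0 : 0 ≤ α ^ 2 + 4 * α := by positivity
  have hs := Real.sq_sqrt h0
  have hsq : M α ^ 2 = α * (1 - M α) := by
    unfold M
    nlinarith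
  have h1 : α + 2 / 3 ≤ Real.sqrt (α ^ 2 + 4 * α) := Real.le_sqrt_of_sq_le (by nlinarith)
  have h2 : 1 / 3 ≤ M α := by
    unfold M
    linarith
  refine ⟨h2, ?_, hsq⟩
  by_contra! h
  nlinarith

/-- Truncation to `[0, m]`; `clip m s / m` is the distribution function at `s` of the uniform law
on `[0, m]`. -/
noncomputable def clip (m x : ℝ) : ℝ := max 0 (min m x)

lemma clip_nonneg (m x : ℝ) : 0 ≤ clip m x := le_max_left _ _

lemma clip_of_nonpos {m x : ℝ} (hx : x ≤ 0) : clip m x = 0 :=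
  max_eq_left ((min_le_right _ _).trans hx)

lemma clip_le_self {m x : ℝ} (hx : 0 ≤ x) : clip m x ≤ x := max_le hx (min_le_right _ _)

lemma clip_le {m : ℝ} (hm : 0 ≤ m) (x : ℝ) : clip m x ≤ m := max_le hm (min_le_left _ _)

lemma clip_of_mem {m x : ℝ} (hx : 0 ≤ x) (hxm : x ≤ m) : clip m x = x := by
  simp [clip, hx, hxm]

/-- The uniform distribution function is a super-solution of the self-similarity equation. The
hypothesis on `α` says that `m` is the fixed point of `T α`. -/
lemma clip_step {α m s : ℝ} (hm : 1 / 3 ≤ m) (hm1 : m < 1) (hα : 0 ≤ α)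
    (hmα : m ^ 2 = α * (1 - m)) (hs : s < m) :
    clip m (s / (1 - s)) + clip m (s / (1 - s) - α) ≤ 2 * clip m s := by
  have h1s : 0 < 1 - s := by linarith
  obtain ⟨u, hu⟩ : ∃ u, u = s / (1 - s) := ⟨_, rfl⟩
  have hus : u * (1 - s) = s := by rw [hu]; field_simp
  rw [← hu]
  rcases le_or_gt s 0 with hs0 | hs0
  · have hu0 : u ≤ 0 := by rw [hu]; exact div_nonpos_of_nonpos_of_nonneg hs0 h1s.le
    rw [clip_of_nonpos hu0, clip_of_nonpos (by linarith)]
    linarith [clip_nonneg m s]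
  have hu0 : 0 < u := by rw [hu]; positivity
  rw [clip_of_mem hs0.le hs.le]
  have a1 := clip_le_self (m := m) hu0.le
  have a2 := clip_le (m := m) (by linarith) u
  rcases le_or_gt u α with h | h
  · rw [clip_of_nonpos (x := u - α) (by linarith)]
    rcases le_or_gt s (1 / 2) with h2 | h2
    · nlinarith
    · linarith
  have a3 := clip_le_self (m := m) (x := u - α) (by linarith)
  rcases le_or_gt u m with h2 | h2
  · -- `2 * u * s ≤ 2 * m * (m / (1 + m)) ≤ m ^ 2 / (1 - m) = α`
    have hsm : s * (1 + m) ≤ m := by nlinarith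
    have h3 : 2 * (u * s) ≤ α := by
      have h4 : u * s ≤ m * s := by nlinarith
      have h5 : 2 * (m * s) * (1 - m) ≤ α * (1 - m) := by
        rw [← hmα]
        have h6 : 2 * s * (1 - m) ≤ m := by nlinarith
        nlinarith
      have := le_of_mul_le_mul_right h5 (by linarith)
      linarith
    nlinarith
  · -- `m + u - α - 2 * s` vanishes at `s = m` and factors through `m - s`
    have hsm : m ≤ s * (1 + m) := by nlinarith
    have hk : (1 - s) * (1 - m) ≤ 1 / 2 := by nlinarith
    have hk0 : 0 < (1 - s) * (1 - m) := mul_pos h1s (by linarith)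
    have h4 : (m + u - α - 2 * s) * ((1 - s) * (1 - m))
        = (m - s) * (2 * ((1 - s) * (1 - m)) - 1) := by
      linear_combination (1 - m) * hus + (1 - s) * hmα
    have h5 : (m + u - α - 2 * s) * ((1 - s) * (1 - m)) ≤ 0 := by
      rw [h4]
      exact mul_nonpos_of_nonneg_of_nonpos (by linarith) (by linarith)
    have h6 : m + u - α - 2 * s ≤ 0 := nonpos_of_mul_nonpos_left h5 hk0
    linarith

/-! ### The maps `T a` and their compositions -/

lemma T_nonneg {a x : ℝ} (ha : 0 ≤ a) (hx : 0 ≤ x) : 0 ≤ T a x := by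
  unfold T
  positivity

lemma T_le_one {a x : ℝ} (ha : 0 ≤ a) (hx : 0 ≤ x) : T a x ≤ 1 := by
  unfold T
  rw [div_le_one (by positivity)]
  linarith

lemma T_mono_s16 {a x y : ℝ} (ha : 0 ≤ a) (hx : 0 ≤ x) (hxy : x ≤ y) : T a x ≤ T a y := by
  unfold T
  have : 0 ≤ y := hx.trans hxy
  rw [div_le_div_iff₀ (by positivity) (by positivity)]
  nlinarith

lemma T_le_iff {a x s : ℝ} (ha : 0 ≤ a) (hx : 0 ≤ x) (hs : s < 1) :
    T a x ≤ s ↔ x ≤ s / (1 - s) - a := by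
  unfold T
  rw [div_le_iff₀ (by positivity), le_sub_iff_add_le, le_div_iff₀ (by linarith)]
  constructor <;> intro h <;> nlinarith

/-- A distance `d ≤ 1 / c` is shrunk by `T a` to at most `d / (1 + d) ≤ 1 / (c + 1)`. -/
lemma T_sub_le {a x y c : ℝ} (ha : 0 ≤ a) (hx : 0 ≤ x) (hxy : x ≤ y) (hc : 0 < c)
    (h : y - x ≤ 1 / c) : T a y - T a x ≤ 1 / (c + 1) := by
  have hy : 0 ≤ y := hx.trans hxy
  have e : T a y - T a x = (y - x) / ((1 + y + a) * (1 + x + a)) := by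
    unfold T
    field_simp
    ring
  rw [e, div_le_div_iff₀ (by positivity) (by positivity)]
  rw [le_div_iff₀ hc] at h
  have h1 : 1 + (y - x) ≤ (1 + y + a) * (1 + x + a) := by
    nlinarith [mul_nonneg hy hx, mul_nonneg hy ha, mul_nonneg hx ha, mul_nonneg ha ha]
  linarith

lemma comp_le_one {x : ℕ → ℝ} (hx : ∀ i, 0 ≤ x i) (n : ℕ) {y : ℝ} (hy : 0 ≤ y) (hy1 : y ≤ 1) :
    comp x n y ≤ 1 := by
  induction n generalizing y with
  | zero => exact hy1
  | succ n ih => exact ih (T_nonneg (hx _) hy) (T_le_one (hx _) hy)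

/-- Deterministic rate of convergence of the backward iterates. -/
lemma comp_sub_le_s16 {x : ℕ → ℝ} (hx : ∀ i, 0 ≤ x i) (n : ℕ) {y z c : ℝ} (hy : 0 ≤ y)
    (hyz : y ≤ z) (hc : 0 < c) (h : z - y ≤ 1 / c) :
    comp x n z - comp x n y ≤ 1 / (c + n) := by
  induction n generalizing y z c with
  | zero => simpa [comp] using h
  | succ n ih =>
    have := ih (T_nonneg (hx (n + 1)) hy) (T_mono_s16 (hx (n + 1)) hy hyz)
      (by positivity : 0 < c + 1) (T_sub_le (hx (n + 1)) hy hyz hc h)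
    rw [show c + ((n + 1 : ℕ) : ℝ) = c + 1 + n by push_cast; ring]
    exact this

lemma comp_succ' (x : ℕ → ℝ) (n : ℕ) (y : ℝ) :
    comp x (n + 1) y = T (x 1) (comp (fun i => x (i + 1)) n y) := by
  induction n generalizing y with
  | zero => rfl
  | succ n ih =>
    rw [comp, ih]
    rfl

/-! ### Binary digits and the doubling map -/

lemma seq_nonneg {α : ℝ} (hα : 0 ≤ α) (t : ℝ) (i : ℕ) : 0 ≤ seq α t i := by
  unfold _root_.seq
  split_ifs <;> simp [hα]

lemma seq_succ (α t : ℝ) (i : ℕ) : seq α t (i + 1) = seq α (2 * t) i := by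
  unfold _root_.seq
  rw [pow_succ, mul_assoc]

/-- The `n`-fold composition of the maps `T` along the digits of `u` at positions `0, …, n - 1`,
evaluated at `y`. Position `0` is the leading digit of the fractional part of `u`; since `comp`
starts reading at position `1`, it corresponds to `u = 2 * t`, see `comp_seq`. -/
noncomputable def iter (α y : ℝ) : ℕ → ℝ → ℝ
  | 0, _ => y
  | n + 1, u => T (seq α u 0) (iter α y n (2 * u))

lemma comp_seq (α y : ℝ) (n : ℕ) (t : ℝ) : comp (seq α t) n y = iter α y n (2 * t) := by
  induction n generalizing t with
  | zero => rfl
  | succ n ih =>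
    rw [comp_succ', iter, ← ih, ← seq_succ]
    congr 2
    funext i
    exact seq_succ α t i

lemma iter_nonneg {α y : ℝ} (hα : 0 ≤ α) (hy : 0 ≤ y) (n : ℕ) (u : ℝ) :
    0 ≤ iter α y n u := by
  induction n generalizing u with
  | zero => exact hy
  | succ n ih => exact T_nonneg (seq_nonneg hα _ _) (ih _)

lemma iter_add_nat (α y : ℝ) (n : ℕ) (u : ℝ) (k : ℕ) :
    iter α y n (u + k) = iter α y n u := by
  induction n generalizing u k with
  | zero => rfl
  | succ n ih =>
    have h1 : seq α (u + k) 0 = seq α u 0 := by simp [_root_.seq]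
    have h2 : 2 * (u + k) = 2 * u + ((2 * k : ℕ) : ℝ) := by push_cast; ring
    rw [iter, iter, h1, h2, ih]

/-- For a `1`-periodic set, the doubling map sends each half of `[0, 1)` onto `[0, 1)` with
Jacobian `2`. No measurability is needed. -/
lemma volume_halves (B : Set ℝ) (hB : ∀ u, u + 1 ∈ B ↔ u ∈ B) :
    volume ({t : ℝ | 2 * t ∈ B} ∩ Ico 0 (1 / 2)) = ENNReal.ofReal (1 / 2) * volume (B ∩ Ico 0 1) ∧
    volume ({t : ℝ | 2 * t ∈ B} ∩ Ico (1 / 2) 1)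
      = ENNReal.ofReal (1 / 2) * volume (B ∩ Ico 0 1) := by
  have key : ∀ C : Set ℝ, volume ((fun t : ℝ => 2 * t) ⁻¹' C)
      = ENNReal.ofReal (1 / 2) * volume C := fun C => by
    rw [Real.volume_preimage_mul_left two_ne_zero]
    congr 2
    norm_num
  have hshift : volume (B ∩ Ico 0 1) = volume (B ∩ Ico 1 2) := by
    rw [← measure_preimage_add_right volume 1 (B ∩ Ico 1 2)]
    congr 1
    ext u
    simp only [mem_inter_iff, mem_Ico, mem_preimage, hB]
    refine and_congr_right fun _ => ⟨fun h => ⟨?_, ?_⟩, fun h => ⟨?_, ?_⟩⟩ <;> linarith [h.1, h.2]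
  constructor
  · rw [← key]
    congr 1
    ext u
    simp only [mem_inter_iff, mem_Ico, mem_preimage, mem_ofPred_eq]
    refine and_congr_right fun _ => ⟨fun h => ⟨?_, ?_⟩, fun h => ⟨?_, ?_⟩⟩ <;> linarith [h.1, h.2]
  · rw [hshift, ← key]
    congr 1
    ext u
    simp only [mem_inter_iff, mem_Ico, mem_preimage, mem_ofPred_eq]
    refine and_congr_right fun _ => ⟨fun h => ⟨?_, ?_⟩, fun h => ⟨?_, ?_⟩⟩ <;> linarith [h.1, h.2]

/-- The iterates started from the fixed point `M α` have distribution functions below the uniform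
one. -/
lemma volume_iter_le {α : ℝ} (hα : 1 / 6 ≤ α) (n : ℕ) (s : ℝ) :
    volume ({u : ℝ | iter α (M α) n u ≤ s} ∩ Ico 0 1)
      ≤ ENNReal.ofReal (clip (M α) s / M α) := by
  obtain ⟨hm, hm1, hmα⟩ := M_facts hα
  have hm0 : 0 < M α := by linarith
  have hα0 : 0 ≤ α := by linarith
  have htriv : ∀ n s, M α ≤ s → volume ({u : ℝ | iter α (M α) n u ≤ s} ∩ Ico 0 1)
      ≤ ENNReal.ofReal (clip (M α) s / M α) := by
    intro n s hs
    have : clip (M α) s = M α := by simp [clip, hs, hm0.le]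
    rw [this, div_self hm0.ne']
    refine (measure_mono inter_subset_right).trans ?_
    simp
  induction n generalizing s with
  | zero =>
    rcases le_or_gt (M α) s with hs | hs
    · exact htriv _ _ hs
    · simp [iter, not_le.mpr hs]
  | succ n ih =>
    rcases le_or_gt (M α) s with hs | hs
    · exact htriv _ _ hs
    have hhalf : ∀ r, volume ({t : ℝ | 2 * t ∈ {u | iter α (M α) n u ≤ r}} ∩ Ico 0 (1 / 2))
          = ENNReal.ofReal (1 / 2) * volume ({u | iter α (M α) n u ≤ r} ∩ Ico 0 1) ∧
        volume ({t : ℝ | 2 * t ∈ {u | iter α (M α) n u ≤ r}} ∩ Ico (1 / 2) 1)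
          = ENNReal.ofReal (1 / 2) * volume ({u | iter α (M α) n u ≤ r} ∩ Ico 0 1) := fun r => by
      refine volume_halves _ fun u => ?_
      have := iter_add_nat α (M α) n u 1
      rw [Nat.cast_one] at this
      simp only [mem_ofPred_eq, this]
    -- condition on the leading digit
    have hsub : {u : ℝ | iter α (M α) (n + 1) u ≤ s} ∩ Ico 0 1 ⊆
        ({t : ℝ | 2 * t ∈ {u | iter α (M α) n u ≤ s / (1 - s)}} ∩ Ico 0 (1 / 2)) ∪
        ({t : ℝ | 2 * t ∈ {u | iter α (M α) n u ≤ s / (1 - s) - α}} ∩ Ico (1 / 2) 1) := by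
      rintro u ⟨hu, hu0, hu1⟩
      have hf : Int.fract u = u := Int.fract_eq_self.mpr ⟨hu0, hu1⟩
      have hnn := iter_nonneg hα0 hm0.le n (2 * u)
      simp only [mem_ofPred_eq, iter] at hu
      rcases lt_or_ge u (1 / 2) with h | h
      · left
        have hd : seq α u 0 = 0 := by
          rw [_root_.seq, pow_zero, one_mul, hf, if_pos h]
        rw [hd, T_le_iff le_rfl hnn (by linarith), sub_zero] at hu
        exact ⟨hu, hu0, h⟩
      · right
        have hd : seq α u 0 = α := by
          rw [_root_.seq, pow_zero, one_mul, hf, if_neg (not_lt.mpr h)]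
        rw [hd, T_le_iff hα0 hnn (by linarith)] at hu
        exact ⟨hu, h, hu1⟩
    refine (measure_mono hsub).trans ((measure_union_le _ _).trans ?_)
    rw [(hhalf _).1, (hhalf _).2]
    calc _ ≤ ENNReal.ofReal (1 / 2) * ENNReal.ofReal (clip (M α) (s / (1 - s)) / M α)
          + ENNReal.ofReal (1 / 2) * ENNReal.ofReal (clip (M α) (s / (1 - s) - α) / M α) := by
          gcongr
          · exact ih _
          · exact ih _
      _ = ENNReal.ofReal
          ((clip (M α) (s / (1 - s)) + clip (M α) (s / (1 - s) - α)) / 2 / M α) := by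
          have h1 := div_nonneg (clip_nonneg (M α) (s / (1 - s))) hm0.le
          have h2 := div_nonneg (clip_nonneg (M α) (s / (1 - s) - α)) hm0.le
          rw [← ENNReal.ofReal_mul (by norm_num), ← ENNReal.ofReal_mul (by norm_num),
            ← ENNReal.ofReal_add (by positivity) (by positivity)]
          congr 1
          ring
      _ ≤ _ := by
          have := clip_step hm hm1 hα0 hmα hs
          gcongr
          linarith

/-! ### Passage to the limit -/

theorem cdf_dominated_by_uniform (α : ℝ) (hα : 1 / 6 ≤ α) :
    ∀ s ∈ Set.Icc 0 (M α), mu α (Set.Iic s) ≤ ENNReal.ofReal (s / M α) := by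
  rintro s ⟨hs0, -⟩
  obtain ⟨hm, hm1, -⟩ := M_facts hα
  have hm0 : 0 < M α := by linarith
  have hα0 : 0 ≤ α := by linarith
  -- `Measure.map` along a function that is not a.e. measurable is `0`, so that case is trivial
  by_cases hY : AEMeasurable (Y α) (volume.restrict (Set.Ico (0 : ℝ) 1))
  swap
  · simp [mu, Measure.map_of_not_aemeasurable hY]
  rw [mu, Measure.map_apply_of_aemeasurable hY measurableSet_Iic,
    Measure.restrict_apply' measurableSet_Ico]
  have hbound : ∀ n : ℕ, volume (Y α ⁻¹' Iic s ∩ Ico 0 1)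
      ≤ ENNReal.ofReal ((s + 1 / (1 + n)) / M α) := by
    intro n
    set r : ℝ := s + 1 / (1 + n) with hr
    have hr0 : 0 ≤ r := by positivity
    set B : Set ℝ := {u | iter α (M α) n u ≤ r}
    have hsub : Y α ⁻¹' Iic s ∩ Ico 0 1 ⊆
        ({t : ℝ | 2 * t ∈ B} ∩ Ico 0 (1 / 2)) ∪ ({t : ℝ | 2 * t ∈ B} ∩ Ico (1 / 2) 1) := by
      rintro t ⟨ht, ht0, ht1⟩
      have hx := seq_nonneg hα0 t
      have h1 : comp (seq α t) n 0 ≤ Y α t := by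
        refine le_ciSup (f := fun n => comp (seq α t) n 0) ⟨1, ?_⟩ n
        rintro _ ⟨k, rfl⟩
        exact comp_le_one hx k le_rfl zero_le_one
      have h2 := comp_sub_le_s16 hx n le_rfl hm0.le one_pos (by linarith : M α - 0 ≤ 1 / 1)
      have h3 : Y α t ≤ s := ht
      have hB : 2 * t ∈ B := by
        change iter α (M α) n (2 * t) ≤ r
        rw [← comp_seq]
        linarith
      rcases lt_or_ge t (1 / 2) with h | h
      · exact Or.inl ⟨hB, ht0, h⟩
      · exact Or.inr ⟨hB, h, ht1⟩
    have hhalf := volume_halves B fun u => by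
      have := iter_add_nat α (M α) n u 1
      rw [Nat.cast_one] at this
      simp only [B, mem_ofPred_eq, this]
    refine (measure_mono hsub).trans ((measure_union_le _ _).trans ?_)
    rw [hhalf.1, hhalf.2, ← add_mul, ← ENNReal.ofReal_add (by norm_num) (by norm_num),
      show (1 / 2 + 1 / 2 : ℝ) = 1 by norm_num, ENNReal.ofReal_one, one_mul]
    refine (volume_iter_le hα n r).trans ?_
    gcongr
    exact clip_le_self hr0
  refine ge_of_tendsto' (x := atTop) ?_ hbound
  refine ENNReal.tendsto_ofReal (Tendsto.div_const ?_ _)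
  have h := (tendsto_one_div_add_atTop_nhds_zero_nat (𝕜 := ℝ)).const_add s
  simpa [add_comm] using h
end
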